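/- Let E be a finite-dimensional complex vector space, f₁,...,f_r ∈ E* linearly independent, and σ₁,...,σ_r ∈ E dual vectors with f_j(σ_k) = δ_{jk}. If ξ ∈ Λ^{r+1}E satisfies δ_{f_r} ⋯ δ_{f_1} ξ = 0, then ξ can be written as ξ = Σ_{j=1}^r δ_{f_j}(σ_j ∧ ξ_j) for some ξ_j ∈ Λ^{r+2}E. (Exactness of the generalized Koszul complex at degree E₂ in the pointwise surjective case.) -/

import Mathlib

/-- Interior multiplication (contraction) by a functional `η ∈ E*` on the exterior
algebra `ΛE`. -/
noncomputable def interiorMul {E : Type*} [AddCommGroup E] [Module ℂ E]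
    (η : Module.Dual ℂ E) : ExteriorAlgebra ℂ E →ₗ[ℂ] ExteriorAlgebra ℂ E :=
  CliffordAlgebra.contractLeft η

/-!
If `f s = 1` then `x = f ⌋ (s ∧ x) + s ∧ (f ⌋ x)`. Starting from `x`, split off the first summand
for the pair `(f₁, s₁)` and apply the same identity for `(f₂, s₂)` to what is left, and so on.
The final remainder `sᵣ ∧ (fᵣ ⌋ ⋯ s₁ ∧ (f₁ ⌋ x))` vanishes: since `fⱼ sₖ = 0` for `k < j`, the
vectors anticommute past the later contractions, so it is
`± sᵣ ∧ ⋯ ∧ s₁ ∧ (fᵣ ⌋ ⋯ ⌋ f₁ ⌋ x) = 0`.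
-/

section

variable {R M : Type*} [CommRing R] [AddCommGroup M] [Module R M]

local infixl:70 "⌋" => CliffordAlgebra.contractLeft

theorem contractLeft_ι_mul_add_ι_mul_contractLeft {Q : QuadraticForm R M}
    {f : Module.Dual R M} {m : M} (hfm : f m = 1) (x : CliffordAlgebra Q) :
    f⌋(CliffordAlgebra.ι Q m * x) + CliffordAlgebra.ι Q m * (f⌋x) = x := by
  rw [CliffordAlgebra.contractLeft_ι_mul, hfm, one_smul, sub_add_cancel]

theorem foldl_contractLeft_ι_mul {Q : QuadraticForm R M} {m : M} {l : List (Module.Dual R M)}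
    (hl : ∀ f ∈ l, f m = 0) (x : CliffordAlgebra Q) :
    l.foldl (fun y f => f⌋y) (CliffordAlgebra.ι Q m * x) =
      (-1 : R) ^ l.length • (CliffordAlgebra.ι Q m * l.foldl (fun y f => f⌋y) x) := by
  induction l using List.reverseRecOn with
  | nil => simp
  | append_singleton l f ih =>
    have hfm : f m = 0 := hl f (by simp)
    have ih := ih fun g hg => hl g (List.mem_append_left [f] hg)
    rw [List.foldl_concat, List.foldl_concat, ih, map_smul, CliffordAlgebra.contractLeft_ι_mul,
      hfm, zero_smul, zero_sub, smul_neg, List.length_append, List.length_singleton, pow_succ,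
      mul_neg_one, neg_smul]

theorem ι_mul_mem_exteriorPower {n : ℕ} (m : M) {x : ExteriorAlgebra R M} (hx : x ∈ ⋀[R]^n M) :
    ExteriorAlgebra.ι R m * x ∈ ⋀[R]^(n + 1) M := by
  rw [ExteriorAlgebra.exteriorPower, pow_succ']
  exact Submodule.mul_mem_mul (LinearMap.mem_range_self _ m) hx

theorem contractLeft_mem_exteriorPower {n : ℕ} (f : Module.Dual R M) {x : ExteriorAlgebra R M}
    (hx : x ∈ ⋀[R]^(n + 1) M) : f⌋x ∈ ⋀[R]^n M := by
  induction n generalizing x with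
  | zero =>
    rw [zero_add, ExteriorAlgebra.exteriorPower, pow_one] at hx
    obtain ⟨m, rfl⟩ := hx
    rw [CliffordAlgebra.contractLeft_ι, ExteriorAlgebra.exteriorPower, pow_zero]
    exact Submodule.algebraMap_mem (f m)
  | succ n ih =>
    rw [ExteriorAlgebra.exteriorPower, pow_succ'] at hx
    refine Submodule.mul_induction_on hx ?_ fun y z hy hz => ?_
    · rintro _ ⟨m, rfl⟩ y hy
      rw [CliffordAlgebra.contractLeft_ι_mul]
      exact sub_mem (Submodule.smul_mem _ _ hy) (ι_mul_mem_exteriorPower m (ih hy))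
    · rw [map_add]
      exact add_mem hy hz

theorem ι_mul_contractLeft_mem_exteriorPower {n : ℕ} (m : M) (f : Module.Dual R M)
    {x : ExteriorAlgebra R M} (hx : x ∈ ⋀[R]^n M) :
    ExteriorAlgebra.ι R m * (f⌋x) ∈ ⋀[R]^n M := by
  cases n with
  | zero =>
    rw [ExteriorAlgebra.exteriorPower, pow_zero] at hx
    obtain ⟨c, rfl⟩ := Submodule.mem_one.mp hx
    rw [CliffordAlgebra.contractLeft_algebraMap, mul_zero]
    exact zero_mem _
  | succ n => exact ι_mul_mem_exteriorPower m (contractLeft_mem_exteriorPower f hx)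

theorem stmt6_general {n r : ℕ} {f : Fin r → Module.Dual R M} {s : Fin r → M}
    (hdiag : ∀ j, f j (s j) = 1) (hlower : ∀ j k, k < j → f j (s k) = 0)
    {x : ExteriorAlgebra R M} (hx : x ∈ ⋀[R]^n M)
    (h0 : (List.ofFn f).foldl (fun y η => η⌋y) x = 0) :
    ∃ y : Fin r → ExteriorAlgebra R M,
      (∀ j, y j ∈ ⋀[R]^n M) ∧ x = ∑ j, f j⌋(ExteriorAlgebra.ι R (s j) * y j) := by
  induction r generalizing x with
  | zero => exact ⟨fun _ => 0, fun _ => zero_mem _, by simpa using h0⟩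
  | succ r ih =>
    have tail_zero : ∀ η ∈ List.ofFn fun i : Fin r => f i.succ, η (s 0) = 0 :=
      List.forall_mem_ofFn_iff.mpr fun i => hlower i.succ 0 i.succ_pos
    have remainder_zero : (List.ofFn fun i : Fin r => f i.succ).foldl (fun y η => η⌋y)
        (ExteriorAlgebra.ι R (s 0) * (f 0⌋x)) = 0 := by
      rw [List.ofFn_succ, List.foldl_cons] at h0
      rw [foldl_contractLeft_ι_mul tail_zero, h0, mul_zero, smul_zero]
    obtain ⟨y, hy, hsum⟩ := ih (fun i => hdiag i.succ)
      (fun j k hkj => hlower j.succ k.succ (Fin.succ_lt_succ_iff.mpr hkj))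
      (ι_mul_contractLeft_mem_exteriorPower (s 0) (f 0) hx) remainder_zero
    refine ⟨Fin.cons x y, Fin.cases hx hy, ?_⟩
    simp only [Fin.sum_univ_succ, Fin.cons_zero, Fin.cons_succ, ← hsum]
    exact (contractLeft_ι_mul_add_ι_mul_contractLeft (hdiag 0) x).symm

end

/-- Exactness of the generalized Koszul complex at `E₂` in the pointwise surjective
case: if `f₁,…,f_r ∈ E*` have dual vectors `σ₁,…,σ_r` (`fⱼ(σₖ) = δⱼₖ`) and
`ξ ∈ Λ^{r+1}E` satisfies `δ_{f_r}⋯δ_{f_1} ξ = 0`, then `ξ = Σⱼ δ_{fⱼ}(σⱼ ∧ ξⱼ)` with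
each `σⱼ ∧ ξⱼ ∈ Λ^{r+2}E`. -/
theorem stmt6 {E : Type*} [AddCommGroup E] [Module ℂ E] {r : ℕ}
    (fj : Fin r → Module.Dual ℂ E) (σ : Fin r → E)
    (hdual : ∀ j k, fj j (σ k) = if j = k then 1 else 0)
    (ξ : ExteriorAlgebra ℂ E) (hξ : ξ ∈ ⋀[ℂ]^(r+1) E)
    (h0 : (List.ofFn fj).foldl (fun x η => interiorMul η x) ξ = 0) :
    ∃ ξj : Fin r → ExteriorAlgebra ℂ E,
      (∀ j, ExteriorAlgebra.ι ℂ (σ j) * ξj j ∈ ⋀[ℂ]^(r+2) E) ∧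
      ξ = ∑ j, interiorMul (fj j) (ExteriorAlgebra.ι ℂ (σ j) * ξj j) := by
  obtain ⟨ξj, hξj, hsum⟩ := stmt6_general (f := fj) (s := σ)
    (fun j => by simp [hdual]) (fun j k hkj => by simp [hdual, hkj.ne']) hξ h0
  exact ⟨ξj, fun j => ι_mul_mem_exteriorPower (σ j) (hξj j), hsum⟩
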